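/- Let n, r ≥ 1, let Φ : (Fin r → Matrix (Fin n) (Fin n) ℝ) → ℝ be continuously differentiable, and let g_i : ℝ → Matrix (Fin n) (Fin n) ℝ (i = 1,…,r) be continuously differentiable curves taking values in invertible matrices with ġ_i(t) = ξ_i(t) * g_i(t) for continuous ξ_i. Then Φ(g_1(t),…,g_r(t)) = 0 for all t ∈ ℝ if and only if Φ(g_1(0),…,g_r(0)) = 0 and, for every t, Σ_{i=1}^{r} ⟨ Ad*_{g_i(t)^{-1}} ( g_i(t)ᵀ * ∇_iΦ(g(t)) ), ξ_i(t) ⟩_F = 0. That is, the admissible velocities allowing feasible motion are exactly those annihilated by the co-Adjoint translates of the left-trivialized differentials of the constraint. -/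

import Mathlib

open scoped Matrix

attribute [local instance] Matrix.frobeniusNormedAddCommGroup Matrix.frobeniusNormedSpace

/-- The Frobenius inner product `⟨A, B⟩_F = trace (Aᵀ * B)`. -/
noncomputable def frobInner {n : ℕ} (A B : Matrix (Fin n) (Fin n) ℝ) : ℝ :=
  (Aᵀ * B).trace

/-- The co-Adjoint action `Ad*_{g⁻¹} μ = (gᵀ)⁻¹ * μ * gᵀ` on a matrix Lie group. -/
noncomputable def coAd {n : ℕ} (g μ : Matrix (Fin n) (Fin n) ℝ) :
    Matrix (Fin n) (Fin n) ℝ :=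
  (gᵀ)⁻¹ * μ * gᵀ

/-- Pairing `ξ` with the co-Adjoint translate of the left-trivialized covector `gᵀ * A` equals
pairing the right-translated velocity `ξ * g` with `A`. -/
theorem frobInner_coAd {n : ℕ} {g : Matrix (Fin n) (Fin n) ℝ} (hg : IsUnit g)
    (A ξ : Matrix (Fin n) (Fin n) ℝ) :
    frobInner (coAd g (gᵀ * A)) ξ = frobInner A (ξ * g) := by
  have hdet : IsUnit gᵀ.det := by
    rw [Matrix.det_transpose]
    exact (Matrix.isUnit_iff_isUnit_det g).mp hg
  rw [frobInner, frobInner, coAd, Matrix.nonsing_inv_mul_cancel_left _ _ hdet,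
    Matrix.transpose_mul, Matrix.transpose_transpose, Matrix.mul_assoc, Matrix.trace_mul_comm,
    Matrix.mul_assoc]

/-- Theorem V.4, for matrix Lie groups: a trajectory of the left-invariant kinematic
multi-agent system `ġᵢ = ξᵢ gᵢ` keeps the constraint `Φ = 0` for all time if and only
if the constraint holds initially and, at every time, the velocities `ξᵢ` are annihilated
by the co-Adjoint translates of the left-trivialized differentials `gᵢᵀ ∇ᵢΦ(g)`. -/
theorem motion_feasibility_iff (n r : ℕ) (hn : 1 ≤ n) (hr : 1 ≤ r)
    (Φ : (Fin r → Matrix (Fin n) (Fin n) ℝ) → ℝ) (hΦ : ContDiff ℝ 1 Φ)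
    (g : Fin r → ℝ → Matrix (Fin n) (Fin n) ℝ)
    (ξ : Fin r → ℝ → Matrix (Fin n) (Fin n) ℝ)
    (hgdiff : ∀ i, ContDiff ℝ 1 (g i))
    (hginv : ∀ i t, IsUnit (g i t))
    (hξcont : ∀ i, Continuous (ξ i))
    (hkin : ∀ i t, HasDerivAt (g i) (ξ i t * g i t) t)
    -- `grad t i` is the Frobenius gradient of `Φ` in its `i`-th matrix slot at the
    -- configuration `(g 1 t, …, g r t)`:
    (grad : ℝ → Fin r → Matrix (Fin n) (Fin n) ℝ)
    (hgrad : ∀ t i V, fderiv ℝ Φ (fun j => g j t) (Pi.single i V) =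
      frobInner (grad t i) V) :
    (∀ t, Φ (fun i => g i t) = 0) ↔
      (Φ (fun i => g i 0) = 0 ∧
        ∀ t, ∑ i, frobInner (coAd (g i t) ((g i t)ᵀ * grad t i)) (ξ i t) = 0) := by
  have hderiv : ∀ t, HasDerivAt (fun s => Φ (fun i => g i s))
      (∑ i, frobInner (coAd (g i t) ((g i t)ᵀ * grad t i)) (ξ i t)) t := by
    intro t
    have hcurve : HasDerivAt (fun s i => g i s) (fun i => ξ i t * g i t) t :=
      hasDerivAt_pi.mpr fun i => hkin i t
    have hcomp := ((hΦ.differentiable one_ne_zero).differentiableAt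
      (x := fun i => g i t)).hasFDerivAt.comp_hasDerivAt t hcurve
    refine hcomp.congr_deriv ?_
    rw [← Finset.univ_sum_single (fun i => ξ i t * g i t), map_sum]
    exact Finset.sum_congr rfl fun i _ =>
      (hgrad t i _).trans (frobInner_coAd (hginv i t) _ _).symm
  constructor
  · intro h
    refine ⟨h 0, fun t => (hderiv t).unique ?_⟩
    simpa only [h] using hasDerivAt_const t (0 : ℝ)
  · rintro ⟨h0, h⟩ t
    rw [← h0]
    exact is_const_of_deriv_eq_zero (fun s => (hderiv s).differentiableAt)
      (fun s => (hderiv s).deriv.trans (h s)) t 0
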